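/- arXiv:2508.02248 — 3 statements merged into one kernel-verified Lean document; each statement's English description precedes it below -/
import Mathlib

section
/- Let P₂ = {{1,2}, {2,3}, {3,4}, {5,6}} and P₃ = {{1,2,3}, {1,5,6}, {2,3,4}, {4,5,6}} be families of subsets of {1, …, 6}. Consider functions K assigning an integer K({i,j}) to each unordered pair of distinct elements of {1, …, 6} and satisfying: (i) K(e) = 2 for every pair e ∈ P₂; (ii) K(e) < 2 for every pair e ∉ P₂; (iii) for every triple T ∈ P₃, the sum of K over the three pairs contained in T equals 4; (iv) for every triple T ⊆ {1, …, 6} with T ∉ P₃, the sum of K over the three pairs contained in T is strictly less than 4; (v) for every i ∈ {1, …, 6}, Σ_{j ≠ i} K({i,j}) = 4. Then there is exactly one such K, namely: K({1,2}) = K({2,3}) = K({3,4}) = K({5,6}) = 2, K({1,5}) = K({1,6}) = K({4,5}) = K({4,6}) = 1, and K(e) = 0 for all other pairs e. -/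
open Finset

/-- The desired two-particle pole channels `P₂ = {{1,2},{2,3},{3,4},{5,6}}`
(vertices `1,…,6` encoded as `0,…,5`). -/
def P₂ : Finset (Sym2 (Fin 6)) := {s(0, 1), s(1, 2), s(2, 3), s(4, 5)}

/-- The desired three-particle pole channels `P₃ = {{1,2,3},{1,5,6},{2,3,4},{4,5,6}}`. -/
def P₃ : Finset (Finset (Fin 6)) := {{0, 1, 2}, {0, 4, 5}, {1, 2, 3}, {3, 4, 5}}

/-- The bootstrap constraint system for the six-particle amplitude with desired simple
poles `s₁₂, s₂₃, s₃₄, s₅₆, s₁₂₃, s₁₅₆, s₂₃₄, s₄₅₆`: (i) `K(e) = 2` on `P₂`;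
(ii) `K(e) < 2` off `P₂`; (iii) the sum of `K` over the three pairs in a triple of
`P₃` equals 4; (iv) the corresponding sum is `< 4` for every other triple;
(v) the single-particle regularity `Σ_{j≠i} K({i,j}) = 4`. -/
def SatBootstrap (K : Sym2 (Fin 6) → ℤ) : Prop :=
  (∀ e ∈ P₂, K e = 2) ∧
  (∀ e : Sym2 (Fin 6), ¬ e.IsDiag → e ∉ P₂ → K e < 2) ∧
  (∀ T ∈ P₃, (∑ e ∈ T.sym2.filter (fun e => ¬ e.IsDiag), K e) = 4) ∧
  (∀ T : Finset (Fin 6), T.card = 3 → T ∉ P₃ →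
    (∑ e ∈ T.sym2.filter (fun e => ¬ e.IsDiag), K e) < 4) ∧
  (∀ i : Fin 6, ∑ j ∈ Finset.univ.filter (fun j => j ≠ i), K s(i, j) = 4)

/-- The unique solution of the bootstrap system:
`K({1,2}) = K({2,3}) = K({3,4}) = K({5,6}) = 2`,
`K({1,5}) = K({1,6}) = K({4,5}) = K({4,6}) = 1`, and `K = 0` on all other pairs. -/
def K₀ : Sym2 (Fin 6) → ℤ :=
  Sym2.lift ⟨fun i j =>
    (![![0, 2, 0, 0, 1, 1],
       ![2, 0, 2, 0, 0, 0],
       ![0, 2, 0, 2, 0, 0],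
       ![0, 0, 2, 0, 1, 1],
       ![1, 0, 0, 1, 0, 2],
       ![1, 0, 0, 1, 2, 0]] : Fin 6 → Fin 6 → ℤ) i j, by decide⟩

theorem triple_sum_eq (K : Sym2 (Fin 6) → ℤ) (a b c : Fin 6)
    (hab : a ≠ b) (hac : a ≠ c) (hbc : b ≠ c) :
    (∑ e ∈ ({a, b, c} : Finset (Fin 6)).sym2.filter (fun e => ¬ e.IsDiag), K e)
      = K s(a, b) + K s(a, c) + K s(b, c) := by
  have h : ({a, b, c} : Finset (Fin 6)).sym2.filter (fun e => ¬ e.IsDiag)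
      = {s(a, b), s(a, c), s(b, c)} := by
    ext e
    induction e using Sym2.ind with
    | _ x y =>
      simp only [mem_filter, Finset.mk_mem_sym2_iff, mem_insert, mem_singleton,
        Sym2.mk_isDiag_iff, Sym2.eq_iff]
      grind
  rw [h, sum_insert, sum_insert, sum_singleton]
  · ring
  · simp only [mem_singleton, Sym2.eq_iff]; grind
  · simp only [mem_insert, mem_singleton, Sym2.eq_iff]; grind

/-- There is exactly one integer-valued assignment `K` on the unordered pairs of
distinct elements of `{1,…,6}` satisfying the bootstrap constraints (i)–(v),
namely `K₀`. -/
theorem bootstrap_unique_solution :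
    SatBootstrap K₀ ∧
      ∀ K : Sym2 (Fin 6) → ℤ, SatBootstrap K →
        ∀ e : Sym2 (Fin 6), ¬ e.IsDiag → K e = K₀ e := by
  refine ⟨⟨by decide, by decide, by decide, ?_, by decide⟩, ?_⟩
  · intro T hT hP
    obtain ⟨a, b, c, hab, hac, hbc, rfl⟩ := Finset.card_eq_three.mp hT
    rw [triple_sum_eq _ _ _ _ hab hac hbc]
    clear hT
    revert a b c
    decide +kernel
  · rintro K ⟨h1, h2, h3, h4, h5⟩
    have e01 := h1 s(0, 1) (by decide)
    have e12 := h1 s(1, 2) (by decide)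
    have e23 := h1 s(2, 3) (by decide)
    have e45 := h1 s(4, 5) (by decide)
    have l04 := h2 s(0, 4) (by decide) (by decide)
    have l05 := h2 s(0, 5) (by decide) (by decide)
    have l34 := h2 s(3, 4) (by decide) (by decide)
    have l35 := h2 s(3, 5) (by decide) (by decide)
    have t1 := h3 {0, 1, 2} (by decide)
    have t2 := h3 {0, 4, 5} (by decide)
    have t3 := h3 {1, 2, 3} (by decide)
    have t4 := h3 {3, 4, 5} (by decide)
    have u1 := h4 {0, 1, 4} (by decide) (by decide)
    have u2 := h4 {0, 1, 5} (by decide) (by decide)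
    rw [triple_sum_eq _ _ _ _ (by decide) (by decide) (by decide)] at t1 t2 t3 t4 u1 u2
    have hs : ∀ i j : Fin 6, K s(i, j) = K s(j, i) := fun i j => by rw [Sym2.eq_swap]
    simp only [Finset.sum_filter, Fin.sum_univ_six] at h5
    have r0 := h5 0
    have r1 := h5 1
    have r2 := h5 2
    have r4 := h5 4
    simp [hs 1 0, hs 2 0, hs 2 1, hs 4 0, hs 4 1, hs 4 2, hs 4 3] at r0 r1 r2 r4
    have key : ∀ i j : Fin 6, i < j → K s(i, j) = K₀ s(i, j) := by
      intro i j hij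
      fin_cases i <;> fin_cases j <;> first
        | exact absurd hij (by decide)
        | (simp [K₀]; omega)
    intro e
    induction e using Sym2.ind with
    | _ x y =>
      intro hd
      rcases lt_trichotomy x y with h | h | h
      · exact key x y h
      · exact absurd h hd
      · rw [Sym2.eq_swap]; exact key y x h
end

section
/- Let n ≥ 4, let z : {1, …, n} → ℂ be injective, and let s : {1, …, n} × {1, …, n} → ℂ satisfy s(a,b) = s(b,a), s(a,a) = 0, momentum conservation Σ_{b} s(a,b) = 0 for every a, and the scattering equations Σ_{b ≠ a} s(a,b)/(z_a − z_b) = 0 for every a. Let A ⊆ {1, …, n} with 2 ≤ |A| ≤ n − 2, let j ∈ A, let p ∉ A, and set s_A = Σ_{{a,b} ⊆ A, a ≠ b} s(a,b); assume s_A ≠ 0. Then the cross-ratio identity holds: −Σ_{i ∈ A, i ≠ j} Σ_{b ∉ A, b ≠ p} (s(i,b)/s_A) · ((z_b − z_p)(z_i − z_j)) / ((z_i − z_b)(z_j − z_p)) = 1. -/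
open Finset

/-- The cross-ratio identity `I_n[A, j, p] = 1` on the support of the scattering
equations: for massless kinematics `s(a,b)` satisfying momentum conservation and the
scattering equations for the punctures `z`, any subset `A` with `2 ≤ |A| ≤ n - 2`,
`j ∈ A`, `p ∉ A`, and `s_A ≠ 0`, one has
`-Σ_{i ∈ A∖{j}} Σ_{b ∉ A, b ≠ p} (s_{ib}/s_A) · (z_{bp} z_{ij})/(z_{ib} z_{jp}) = 1`. -/
theorem cross_ratio_identity (n : ℕ) (hn : 4 ≤ n)
    (z : Fin n → ℂ) (hz : Function.Injective z)
    (s : Fin n → Fin n → ℂ)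
    (hsymm : ∀ a b, s a b = s b a)
    (hdiag : ∀ a, s a a = 0)
    (hmom : ∀ a, ∑ b, s a b = 0)
    (hSE : ∀ a, ∑ b ∈ Finset.univ.filter (fun b => b ≠ a), s a b / (z a - z b) = 0)
    (A : Finset (Fin n)) (hA1 : 2 ≤ A.card) (hA2 : A.card ≤ n - 2)
    (j : Fin n) (hj : j ∈ A) (p : Fin n) (hp : p ∉ A)
    (hsA : (∑ q ∈ (A ×ˢ A).filter (fun q => q.1 < q.2), s q.1 q.2) ≠ 0) :
    -(∑ i ∈ A.erase j, ∑ b ∈ Aᶜ.erase p,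
        (s i b / (∑ q ∈ (A ×ˢ A).filter (fun q => q.1 < q.2), s q.1 q.2)) *
          ((z b - z p) * (z i - z j)) / ((z i - z b) * (z j - z p))) = 1 := by
  have hne : ∀ a b, a ≠ b → z a - z b ≠ 0 := fun a b h => sub_ne_zero.mpr (fun e => h (hz e))
  have hjp : z j - z p ≠ 0 := hne j p (fun e => hp (e ▸ hj))
  set S := ∑ q ∈ (A ×ˢ A).filter (fun q => q.1 < q.2), s q.1 q.2 with hS
  let g : Fin n → Fin n → ℂ := fun i b => s i b * ((z b - z p) * (z i - z j)) / (z i - z b)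
  have hg : ∀ i b, g i b = s i b * ((z b - z p) * (z i - z j)) / (z i - z b) := fun _ _ => rfl
  have hSE' : ∀ a, ∑ b, s a b / (z a - z b) = 0 := by
    intro a
    rw [← hSE a, Finset.sum_filter]
    refine Finset.sum_congr rfl fun b _ => ?_
    by_cases h : b = a
    · simp [h]
    · simp [h]
  have hg0 : ∀ i, ∑ b, g i b = 0 := by
    intro i
    have h1 : ∀ b, g i b = (z i - z p) * (z i - z j) * (s i b / (z i - z b))
        - (z i - z j) * s i b := by
      intro b
      rw [hg]
      by_cases h : i = b
      · subst h; simp [hdiag]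
      · have := hne i b h
        field_simp
        ring
    simp_rw [h1]
    rw [Finset.sum_sub_distrib, ← Finset.mul_sum, ← Finset.mul_sum, hSE', hmom]
    ring
  have hgs : ∀ i b, g i b + g b i = s i b * (z j - z p) := by
    intro i b
    rw [hg, hg]
    by_cases h : i = b
    · subst h; simp [hdiag]
    · have h1 := hne i b h
      have h2 : z b - z i = -(z i - z b) := by ring
      rw [h2, hsymm b i, div_neg]
      field_simp
      ring
  have hsplit : ∀ i, ∑ b ∈ Aᶜ, g i b = -∑ b ∈ A, g i b := by
    intro i
    have := Finset.sum_add_sum_compl A (g i)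
    rw [hg0] at this
    linear_combination this
  have hD : ∑ i ∈ A, ∑ b ∈ A, s i b = 2 * S := by
    have e1 : S = ∑ i ∈ A, ∑ b ∈ A, if i < b then s i b else 0 := by
      rw [hS, Finset.sum_filter, Finset.sum_product]
    have e2 : S = ∑ i ∈ A, ∑ b ∈ A, if b < i then s i b else 0 := by
      rw [e1, Finset.sum_comm]
      refine Finset.sum_congr rfl fun i _ => Finset.sum_congr rfl fun b _ => ?_
      rw [hsymm]
    rw [two_mul]
    nth_rewrite 1 [e1]
    rw [e2, ← Finset.sum_add_distrib]
    refine Finset.sum_congr rfl fun i _ => ?_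
    rw [← Finset.sum_add_distrib]
    refine Finset.sum_congr rfl fun b _ => ?_
    rcases lt_trichotomy i b with h | h | h
    · simp [h, h.not_gt]
    · subst h; simp [hdiag]
    · simp [h, h.not_gt]
  have hGG : ∑ i ∈ A, ∑ b ∈ A, g i b = S * (z j - z p) := by
    have e : ∑ i ∈ A, ∑ b ∈ A, g i b + ∑ i ∈ A, ∑ b ∈ A, g b i = 2 * S * (z j - z p) := by
      rw [← hD, Finset.sum_mul, ← Finset.sum_add_distrib]
      refine Finset.sum_congr rfl fun i _ => ?_
      rw [Finset.sum_mul, ← Finset.sum_add_distrib]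
      exact Finset.sum_congr rfl fun b _ => hgs i b
    have e' : ∑ i ∈ A, ∑ b ∈ A, g b i = ∑ i ∈ A, ∑ b ∈ A, g i b := Finset.sum_comm
    rw [e'] at e
    linear_combination e / 2
  have hT : ∑ i ∈ A.erase j, ∑ b ∈ Aᶜ.erase p, g i b = -(S * (z j - z p)) := by
    rw [← hGG, ← Finset.sum_neg_distrib]
    rw [Finset.sum_erase_eq_sub hj]
    have hj0 : ∑ b ∈ Aᶜ.erase p, g j b = 0 := Finset.sum_eq_zero fun b _ => by simp [hg]
    rw [hj0, sub_zero]
    refine Finset.sum_congr rfl fun i _ => ?_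
    rw [← hsplit, Finset.sum_erase]
    simp [hg]
  have hfin : ∑ i ∈ A.erase j, ∑ b ∈ Aᶜ.erase p,
      (s i b / S) * ((z b - z p) * (z i - z j)) / ((z i - z b) * (z j - z p))
      = (∑ i ∈ A.erase j, ∑ b ∈ Aᶜ.erase p, g i b) / (S * (z j - z p)) := by
    rw [Finset.sum_div]
    refine Finset.sum_congr rfl fun i _ => ?_
    rw [Finset.sum_div]
    refine Finset.sum_congr rfl fun b _ => ?_
    rw [hg]
    simp only [div_eq_mul_inv, mul_inv]
    ring
  rw [hfin, hT, neg_div, neg_neg, div_self (mul_ne_zero hsA hjp)]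
end

section
/- Let V be a finite vertex set. For pairwise distinct vertices i, j, k, l ∈ V, let q(i,j,k,l) denote the quadrilateral weighted graph with weight +1 on the pairs {i,j} and {k,l}, weight −1 on the pairs {i,k} and {j,l}, and weight 0 on all other pairs (the 0-regular graph of the elementary four-point cross-ratio z_{ij} z_{kl} / (z_{ik} z_{jl})). Then every 0-regular weighted graph w on V (i.e. every integer weight function on unordered pairs of distinct vertices with Σ_{u≠v} w({v,u}) = 0 for all v ∈ V) is a finite integer linear combination of quadrilateral weighted graphs q(i,j,k,l). Equivalently, every 0-regular graph decomposes, at the level of net edge multiplicities, into a product of elementary four-point cross-ratios and their inverses. -/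
open Finset

/-- The net degree of a vertex `v` in the weighted graph `w`:
`deg_w(v) = Σ_{u ≠ v} w({v,u})`. -/
def netDeg {V : Type*} [Fintype V] [DecidableEq V] (w : Sym2 V → ℤ) (v : V) : ℤ :=
  ∑ u ∈ Finset.univ.filter (fun u => u ≠ v), w s(v, u)

/-- The quadrilateral weighted graph of the elementary four-point cross-ratio
`z_{ij} z_{kl} / (z_{ik} z_{jl})`: weight `+1` on `{i,j}` and `{k,l}`, weight `-1`
on `{i,k}` and `{j,l}`, and weight `0` elsewhere. -/
def quad {V : Type*} [DecidableEq V] (i j k l : V) : Sym2 V → ℤ := fun e =>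
  (if e = s(i, j) then 1 else 0) + (if e = s(k, l) then 1 else 0)
    - (if e = s(i, k) then 1 else 0) - (if e = s(j, l) then 1 else 0)

lemma nd_sum_ind {V : Type*} [Fintype V] [DecidableEq V] (i j v : V) (h : i ≠ j) :
    ∑ u, (if s(v, u) = s(i, j) then (1 : ℤ) else 0)
      = (if v = i then 1 else 0) + (if v = j then 1 else 0) := by
  have : ∀ u, (if s(v, u) = s(i, j) then (1 : ℤ) else 0)
      = (if u = j then (if v = i then 1 else 0) else 0)
        + (if u = i then (if v = j then 1 else 0) else 0) := by
    intro u
    simp only [Sym2.eq_iff]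
    grind
  simp only [this, sum_add_distrib, sum_ite_eq', mem_univ, if_true]

lemma nd_sum_quad {V : Type*} [Fintype V] [DecidableEq V] (i j k l v : V) (h1 : i ≠ j)
    (h2 : i ≠ k) (h3 : j ≠ l) (h4 : k ≠ l) : ∑ u, quad i j k l s(v, u) = 0 := by
  simp only [quad, sum_add_distrib, sum_sub_distrib, nd_sum_ind _ _ _ h1, nd_sum_ind _ _ _ h2,
    nd_sum_ind _ _ _ h3, nd_sum_ind _ _ _ h4]
  ring

lemma nd_small_zero {V : Type*} [Fintype V] [DecidableEq V] (T : Finset V) (hT : T.card ≤ 3)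
    (w : Sym2 V → ℤ) (hd : ∀ x, w s(x, x) = 0) (hs : ∀ x y, x ∉ T → w s(x, y) = 0)
    (hr : ∀ v, ∑ u, w s(v, u) = 0) : w = 0 := by
  have hs' : ∀ x y, y ∉ T → w s(x, y) = 0 := fun x y h => by
    rw [Sym2.eq_swap]; exact hs y x h
  funext e
  induction e using Sym2.ind with
  | _ x y =>
  show w s(x, y) = 0
  by_cases hx : x ∈ T
  swap
  · exact hs x y hx
  by_cases hy : y ∈ T
  swap
  · exact hs' x y hy
  by_cases hxy : x = y
  · rw [hxy]; exact hd y
  have hc : ((T.erase x).erase y).card ≤ 1 := by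
    rw [card_erase_of_mem (mem_erase.2 ⟨Ne.symm hxy, hy⟩), card_erase_of_mem hx]; omega
  have : Nonempty V := ⟨x⟩
  rw [card_le_one_iff_subset_singleton] at hc
  obtain ⟨z, hz⟩ := hc
  by_cases hz' : z ∈ (T.erase x).erase y
  · have hzx : z ≠ x := by grind
    have hzy : z ≠ y := by grind
    have key : ∀ v, w s(v, x) + w s(v, y) + w s(v, z) = 0 := by
      intro v
      rw [← hr v, ← sum_subset (subset_univ {x, y, z})]
      · rw [sum_insert (by grind), sum_insert (by grind), sum_singleton]; ring
      · intro u _ hu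
        apply hs'
        intro huT
        have : u ∈ (T.erase x).erase y := by grind
        have := hz this
        grind
    have h1 := key x
    have h2 := key y
    have h3 := key z
    rw [hd] at h1 h2 h3
    rw [Sym2.eq_swap (a := y) (b := x)] at h2
    rw [Sym2.eq_swap (a := z) (b := x), Sym2.eq_swap (a := z) (b := y)] at h3
    omega
  · rw [← hr x]
    symm
    apply sum_eq_single y
    · intro u _ hu
      by_cases hux : u = x
      · rw [hux]; exact hd x
      apply hs'
      intro huT
      have h5 : u ∈ (T.erase x).erase y := by grind
      have := hz h5
      grind
    · simp

lemma main_ind {V : Type*} [Fintype V] [DecidableEq V] (S : Finset V) :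
    ∀ (w : Sym2 V → ℤ) (_ : ∀ x, w s(x, x) = 0) (_ : ∀ x y, x ∉ S → w s(x, y) = 0)
    (_ : ∀ v, ∑ u, w s(v, u) = 0),
    w ∈ Submodule.span ℤ {g : Sym2 V → ℤ | ∃ i j k l : V,
      i ≠ j ∧ i ≠ k ∧ i ≠ l ∧ j ≠ k ∧ j ≠ l ∧ k ≠ l ∧ g = quad i j k l} := by
  induction S using Finset.induction_on with
  | empty =>
    intro w hd hs hr
    rw [nd_small_zero ∅ (by simp) w hd hs hr]
    exact Submodule.zero_mem _
  | insert a S ha ih =>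
    intro w hd hs hr
    by_cases hc : S.card ≤ 2
    · rw [nd_small_zero (insert a S) (by rw [card_insert_of_notMem ha]; omega) w hd hs hr]
      exact Submodule.zero_mem _
    have hb : S.Nonempty := by rw [← card_pos]; omega
    obtain ⟨b, hb⟩ := hb
    have hl : ∀ u, ∃ l, l ∈ S ∧ l ≠ u ∧ l ≠ b := by
      intro u
      have : ((S.erase u).erase b).Nonempty := by
        rw [← card_pos]
        have h1 := pred_card_le_card_erase (s := S) (a := u)
        have h2 := pred_card_le_card_erase (s := S.erase u) (a := b)
        omega
      obtain ⟨l, hl⟩ := this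
      exact ⟨l, by grind⟩
    choose l hlS hlu hlb using hl
    have hab : a ≠ b := by grind
    have hal : ∀ u, a ≠ l u := fun u h => ha (h ▸ hlS u)
    set c : Sym2 V → ℤ := ∑ u ∈ S.erase b, w s(a, u) • quad a u b (l u) with hcdef
    have hcv : ∀ e, c e = ∑ u ∈ S.erase b, w s(a, u) * quad a u b (l u) e := by
      intro e; simp [hcdef, Finset.sum_apply]
    have hcm : c ∈ Submodule.span ℤ {g : Sym2 V → ℤ | ∃ i j k l : V,
      i ≠ j ∧ i ≠ k ∧ i ≠ l ∧ j ≠ k ∧ j ≠ l ∧ k ≠ l ∧ g = quad i j k l} := by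
      apply Submodule.sum_mem
      intro u hu
      apply Submodule.smul_mem
      apply Submodule.subset_span
      exact ⟨a, u, b, l u, by grind, hab, hal u, by grind, (hlu u).symm, (hlb u).symm, rfl⟩
    have hd' : ∀ x, (w - c) s(x, x) = 0 := by
      intro x
      rw [Pi.sub_apply, hd, hcv, sum_eq_zero]
      · simp
      · intro u hu
        have h1 : a ≠ u := by grind
        have h2 := hlu u
        have h3 := hlb u
        simp only [quad, Sym2.eq_iff]
        grind
    have hr' : ∀ v, ∑ u, (w - c) s(v, u) = 0 := by
      intro v
      simp only [Pi.sub_apply, sum_sub_distrib, hr, hcv]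
      rw [sum_comm, sum_eq_zero]
      · simp
      · intro u hu
        rw [← mul_sum, nd_sum_quad _ _ _ _ _ (by grind) hab (hlu u).symm (hlb u).symm, mul_zero]
    have hout : ∀ x y, x ∉ insert a S → (w - c) s(x, y) = 0 := by
      intro x y hx
      rw [Pi.sub_apply, hs x y hx, hcv, sum_eq_zero]
      · simp
      · intro u hu
        have h1 := hlS u
        simp only [quad, Sym2.eq_iff]
        grind
    have hay : ∀ y, y ≠ b → (w - c) s(a, y) = 0 := by
      intro y hyb
      by_cases hya : y = a
      · rw [hya]; exact hd' a
      by_cases hyS : y ∈ S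
      swap
      · rw [Sym2.eq_swap]; exact hout y a (by grind)
      rw [Pi.sub_apply, hcv, sum_eq_single y]
      · have h1 := hal y
        have h2 := hlu y
        have : quad a y b (l y) s(a, y) = 1 := by
          simp only [quad, Sym2.eq_iff]
          grind
        rw [this]; ring
      · intro u hu huy
        have h1 := hal u
        have : quad a u b (l u) s(a, y) = 0 := by
          simp only [quad, Sym2.eq_iff]
          grind
        rw [this, mul_zero]
      · grind
    have hs' : ∀ x y, x ∉ S → (w - c) s(x, y) = 0 := by
      intro x y hx
      by_cases hxa : x = a
      · subst hxa
        by_cases hyb : y = b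
        · subst hyb
          rw [← hr' x]
          symm
          apply sum_eq_single y
          · intro u _ hu; exact hay u hu
          · simp
        · exact hay y hyb
      · exact hout x y (by grind)
    have := Submodule.add_mem _ (ih (w - c) hd' hs' hr') hcm
    rwa [sub_add_cancel] at this

/-- Every 0-regular weighted graph on a finite vertex set (an integer weight function
on unordered pairs of distinct vertices whose net degree vanishes at every vertex) is
a finite integer linear combination of quadrilateral weighted graphs `quad i j k l`
with `i, j, k, l` pairwise distinct: every 0-regular graph decomposes, at the level
of net edge multiplicities, into a product of elementary four-point cross-ratios and
their inverses. -/
theorem zeroRegular_decomposition {V : Type*} [Fintype V] [DecidableEq V]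
    (w : Sym2 V → ℤ)
    (hdiag : ∀ e : Sym2 V, e.IsDiag → w e = 0)
    (hreg : ∀ v : V, netDeg w v = 0) :
    w ∈ Submodule.span ℤ {g : Sym2 V → ℤ | ∃ i j k l : V,
      i ≠ j ∧ i ≠ k ∧ i ≠ l ∧ j ≠ k ∧ j ≠ l ∧ k ≠ l ∧ g = quad i j k l} := by
  have hd : ∀ x, w s(x, x) = 0 := fun x => hdiag _ (by simp)
  apply main_ind univ w hd (by simp)
  intro v
  rw [← hreg v, netDeg]
  symm
  apply sum_subset (subset_univ _)
  intro u _ hu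
  have : u = v := by simpa using hu
  rw [this]; exact hd v
end
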